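/- Let V = [V_1,…,V_N] (N ≥ 2) be a row-isometry of dilation type on a Hilbert space K. Let Q be the orthogonal projection of K onto the orthogonal complement of the closed linear span of the wandering vectors of V (the structure projection of the free semigroup algebra generated by V), and let 𝒱 = QK. Then for every nonzero vector v ∈ 𝒱 there exists a word w over {1,…,N} such that V_wv ∉ 𝒱. -/

import Mathlib

noncomputable section

open scoped InnerProductSpace ComplexInnerProductSpace Classical

section GeneralDefs

variable {E : Type*} [NormedAddCommGroup E] [InnerProductSpace ℂ E]

/-- The operator associated to a word: `wordOp V [a₁, …, a_r] = V a₁ * ⋯ * V a_r`. -/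
def wordOp {ι : Type*} (V : ι → E →L[ℂ] E) (w : List ι) : E →L[ℂ] E :=
  (w.map V).prod

/-- The operator associated to a word of fixed length `k` given as a function `Fin k → ι`. -/
def fnWordOp {ι : Type*} {k : ℕ} (V : ι → E →L[ℂ] E) (u : Fin k → ι) : E →L[ℂ] E :=
  wordOp V (List.ofFn u)

/-- The closure of a set of operators in the weak operator topology, described via
basic WOT-neighbourhoods (finitely many vector functionals). -/
def wotClosure (S : Set (E →L[ℂ] E)) : Set (E →L[ℂ] E) :=
  {A | ∀ ε > (0 : ℝ), ∀ F : Finset (E × E), ∃ B ∈ S, ∀ p ∈ F, ‖⟪p.1, (A - B) p.2⟫‖ < ε}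

/-- The unital WOT-closed algebra generated by a set of operators. -/
def genWotAlg (G : Set (E →L[ℂ] E)) : Set (E →L[ℂ] E) :=
  wotClosure ((Algebra.adjoin ℂ G : Subalgebra ℂ (E →L[ℂ] E)) : Set (E →L[ℂ] E))

/-- A wandering vector for a row-isometry `V = [V_a : a ∈ ι]`: a unit vector whose orbit
under all words in the `V_a` is an orthonormal family. -/
def IsWandering {ι : Type*} (V : ι → E →L[ℂ] E) (ζ : E) : Prop :=
  ‖ζ‖ = 1 ∧ ∀ w w' : List ι,
    ⟪wordOp V w ζ, wordOp V w' ζ⟫ = if w = w' then 1 else 0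

/-- Restriction of an operator to an invariant subspace (junk value `0` if not invariant). -/
def restrictCLM (A : E →L[ℂ] E) (M : Submodule ℂ E) : M →L[ℂ] M :=
  if h : ∀ x ∈ M, A x ∈ M then
    { toFun := fun x => ⟨A x, h x x.2⟩
      map_add' := by intro x y; ext; simp
      map_smul' := by intro c x; ext; simp
      cont := Continuous.subtype_mk (A.continuous.comp continuous_subtype_val) _ }
  else 0

/-- The unital WOT-closed algebra on `M` generated by the restrictions of the `V a` to `M`. -/
def rowAlgOn {ι : Type*} (V : ι → E →L[ℂ] E) (M : Submodule ℂ E) : Set (M →L[ℂ] M) :=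
  genWotAlg (Set.range fun a => restrictCLM (V a) M)

/-- The unital WOT-closed algebra on `M` generated by the restrictions of the `V a`
is self-adjoint. -/
def restrictedAlgSelfAdjoint {ι : Type*} (V : ι → E →L[ℂ] E) (M : Submodule ℂ E) : Prop :=
  ∀ A ∈ rowAlgOn V M, ∃ B ∈ rowAlgOn V M,
    ∀ x y : M, ⟪((A x : M) : E), (y : E)⟫ = ⟪(x : E), ((B y : M) : E)⟫

variable [CompleteSpace E]

/-- A row-isometry is of dilation type if it is defect free and has no nonzero reducing
subspace on which it is either absolutely continuous (spanned by wandering vectors) or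
singular (generating a self-adjoint WOT-closed algebra). -/
def IsDilationType {ι : Type*} [Fintype ι] (V : ι → E →L[ℂ] E) : Prop :=
  (∑ a, V a * star (V a)) = 1 ∧
    ¬ ∃ M : Submodule ℂ E, M ≠ ⊥ ∧ IsClosed (M : Set E) ∧
      (∀ a, ∀ x ∈ M, V a x ∈ M) ∧ (∀ a, ∀ x ∈ M, star (V a) x ∈ M) ∧
      ((M = (Submodule.span ℂ {ζ : E | ζ ∈ M ∧ IsWandering V ζ}).topologicalClosure) ∨
        restrictedAlgSelfAdjoint V M)

end GeneralDefs

/-- An isometric representation of the single-vertex 2-graph `F_θ⁺` on a Hilbert space `H`. -/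
structure TwoGraphRep (m n : ℕ) (θ : Equiv.Perm (Fin m × Fin n)) (H : Type*)
    [NormedAddCommGroup H] [InnerProductSpace ℂ H] [CompleteSpace H] where
  S : Fin m → H →L[ℂ] H
  T : Fin n → H →L[ℂ] H
  isometS : ∀ i i', star (S i) * S i' = if i = i' then 1 else 0
  isometT : ∀ j j', star (T j) * T j' = if j = j' then 1 else 0
  comm : ∀ i j, S i * T j = T (θ (i, j)).2 * S (θ (i, j)).1

namespace TwoGraphRep

variable {m n : ℕ} {θ : Equiv.Perm (Fin m × Fin n)} {H : Type*}
  [NormedAddCommGroup H] [InnerProductSpace ℂ H] [CompleteSpace H]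

/-- A representation is of Cuntz type if both row-isometries are defect free. -/
def CuntzType (ρ : TwoGraphRep m n θ H) : Prop :=
  (∑ i, ρ.S i * star (ρ.S i)) = 1 ∧ (∑ j, ρ.T j * star (ρ.T j)) = 1

/-- The nonself-adjoint 2-graph algebra `𝔖`: the unital WOT-closed algebra generated by
the `S_i` and `T_j`. -/
def alg (ρ : TwoGraphRep m n θ H) : Set (H →L[ℂ] H) :=
  genWotAlg (Set.range ρ.S ∪ Set.range ρ.T)

/-- The von Neumann algebra generated by the `S_i` and `T_j`: the WOT-closure of the
unital *-algebra they generate. -/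
def vnAlg (ρ : TwoGraphRep m n θ H) : Set (H →L[ℂ] H) :=
  genWotAlg ((Set.range ρ.S ∪ Set.range ρ.T) ∪ star '' (Set.range ρ.S ∪ Set.range ρ.T))

/-- Wandering vector for the row-isometry `[S_u T_v : |u| = k, |v| = l]`. -/
def IsWanderingKL (ρ : TwoGraphRep m n θ H) (k l : ℕ) (ζ : H) : Prop :=
  ‖ζ‖ = 1 ∧ ∀ (p p' : ℕ) (u u' : List (Fin m)) (v v' : List (Fin n)),
    u.length = p * k → v.length = p * l → u'.length = p' * k → v'.length = p' * l →
    ⟪(wordOp ρ.S u * wordOp ρ.T v) ζ, (wordOp ρ.S u' * wordOp ρ.T v') ζ⟫ =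
      if u = u' ∧ v = v' then 1 else 0

/-- The range of the structure projection `P_{k,l}`: the orthogonal complement of the
closed linear span of the wandering vectors of `[S_u T_v : |u| = k, |v| = l]`. -/
def structSpaceKL (ρ : TwoGraphRep m n θ H) (k l : ℕ) : Submodule ℂ H :=
  ((Submodule.span ℂ {ζ : H | ρ.IsWanderingKL k l ζ}).topologicalClosure)ᗮ

/-- The range of the first structure projection `P = ⋀_{k,l>0} P_{k,l}`. -/
def firstStructSpace (ρ : TwoGraphRep m n θ H) : Submodule ℂ H :=
  ⨅ (k : ℕ) (l : ℕ) (_ : 0 < k) (_ : 0 < l), ρ.structSpaceKL k l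

/-- The row-isometry `[S_u T_v : |u| = k, |v| = l]`. -/
def rowKL (ρ : TwoGraphRep m n θ H) (k l : ℕ) :
    ((Fin k → Fin m) × (Fin l → Fin n)) → H →L[ℂ] H :=
  fun p => fnWordOp ρ.S p.1 * fnWordOp ρ.T p.2

/-- A wandering vector for the representation `(S,T)`. -/
def IsWanderingRep (ρ : TwoGraphRep m n θ H) (ζ : H) : Prop :=
  ‖ζ‖ = 1 ∧ ∀ (u u' : List (Fin m)) (v v' : List (Fin n)),
    ⟪(wordOp ρ.S u * wordOp ρ.T v) ζ, (wordOp ρ.S u' * wordOp ρ.T v') ζ⟫ =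
      if u = u' ∧ v = v' then 1 else 0

/-- The representation is irreducible: the only closed subspaces invariant under all
`S_i, T_j, S_i*, T_j*` are `⊥` and `⊤`. -/
def Irreducible (ρ : TwoGraphRep m n θ H) : Prop :=
  ∀ M : Submodule ℂ H, IsClosed (M : Set H) →
    (∀ i, ∀ x ∈ M, ρ.S i x ∈ M) → (∀ i, ∀ x ∈ M, star (ρ.S i) x ∈ M) →
    (∀ j, ∀ x ∈ M, ρ.T j x ∈ M) → (∀ j, ∀ x ∈ M, star (ρ.T j) x ∈ M) →
    M = ⊥ ∨ M = ⊤

/-- The representation is atomic with standard basis `ξ`: every generator maps each basis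
vector to a unimodular multiple of a basis vector. -/
def AtomicBasis {Λ : Type*} (ρ : TwoGraphRep m n θ H) (ξ : HilbertBasis Λ ℂ H) : Prop :=
  (∀ i t, ∃ (c : ℂ) (t' : Λ), ‖c‖ = 1 ∧ ρ.S i (ξ t) = c • ξ t') ∧
  (∀ j t, ∃ (c : ℂ) (t' : Λ), ‖c‖ = 1 ∧ ρ.T j (ξ t) = c • ξ t')

/-- `x` has a blue ring: `S_u x ∈ 𝕋x` for some nonempty word `u`. -/
def HasBlueRing (ρ : TwoGraphRep m n θ H) (x : H) : Prop :=
  ∃ u : List (Fin m), u ≠ [] ∧ ∃ c : ℂ, ‖c‖ = 1 ∧ wordOp ρ.S u x = c • x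

/-- `x` has a red ring: `T_v x ∈ 𝕋x` for some nonempty word `v`. -/
def HasRedRing (ρ : TwoGraphRep m n θ H) (x : H) : Prop :=
  ∃ v : List (Fin n), v ≠ [] ∧ ∃ c : ℂ, ‖c‖ = 1 ∧ wordOp ρ.T v x = c • x

/-- `x` has a mixed ring: `T_v S_u x ∈ 𝕋x` for some nonempty words `u`, `v`. -/
def HasMixedRing (ρ : TwoGraphRep m n θ H) (x : H) : Prop :=
  ∃ (u : List (Fin m)) (v : List (Fin n)), u ≠ [] ∧ v ≠ [] ∧
    ∃ c : ℂ, ‖c‖ = 1 ∧ wordOp ρ.T v (wordOp ρ.S u x) = c • x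

end TwoGraphRep

/-!
If the orbit of some `v ≠ 0` stays in `𝒱`, the vectors with this property form a nonzero closed
invariant subspace without wandering vectors. Any closed invariant subspace `L` without wandering
vectors is reducing, since a unit vector of `L` orthogonal to all `V_a L` is wandering. It remains
to see that a row-isometry without wandering vectors generates a self-adjoint algebra, for then this
subspace is a singular summand.

The key fact is that a nonzero vector `y` for which `e_w ↦ V_w y` is bounded on the Fock space
forces a wandering vector to exist. Otherwise successive corrections, each by a vector nearly
orthogonal to the previous choices, produce `y` and `z` with `⟪V_w y, z⟫ = 0` for `w ≠ ∅` and
`⟪y, z⟫ = 1`. The vectors whose orbit is orthogonal to `z` form a closed invariant, hence reducing,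
subspace, which contains `V_a y` but not `y = V_a* V_a y`.

A coordinate of a wandering vector for an ampliation `V ⊕ ⋯ ⊕ V` is such a `y`, so if `V` has no
wandering vectors, neither do its ampliations, and all their closed invariant subspaces reduce.
Applied to cyclic subspaces, this makes adjoints of polynomials in `V` strong limits of polynomials
in `V`.
-/

open Filter Topology
open scoped InnerProduct

section WanderingVectors

variable {ι E F H : Type*}
  [NormedAddCommGroup E] [InnerProductSpace ℂ E]
  [NormedAddCommGroup F] [InnerProductSpace ℂ F]
  [NormedAddCommGroup H] [InnerProductSpace ℂ H]

section Words

variable {V : ι → E →L[ℂ] E}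

@[simp] lemma wordOp_nil : wordOp V [] = 1 := rfl

lemma wordOp_cons (a : ι) (w : List ι) : wordOp V (a :: w) = V a * wordOp V w := by
  simp only [wordOp, List.map_cons, List.prod_cons]

lemma wordOp_append (u w : List ι) : wordOp V (u ++ w) = wordOp V u * wordOp V w := by
  simp only [wordOp, List.map_append, List.prod_append]

lemma wordOp_cons_apply (a : ι) (w : List ι) (x : E) :
    wordOp V (a :: w) x = V a (wordOp V w x) := by
  rw [wordOp_cons, mul_apply_eq_comp]

lemma wordOp_append_apply (u w : List ι) (x : E) :
    wordOp V (u ++ w) x = wordOp V u (wordOp V w x) := by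
  rw [wordOp_append, mul_apply_eq_comp]

lemma wordOp_mem {L : Submodule ℂ E} (hL : ∀ a, ∀ x ∈ L, V a x ∈ L) (w : List ι) {x : E}
    (hx : x ∈ L) : wordOp V w x ∈ L := by
  induction w with
  | nil => exact hx
  | cons a w ih => exact wordOp_cons_apply (V := V) a w x ▸ hL a _ ih

variable (V) in
/-- The largest `V`-invariant subspace contained in `W`, encoded as the set of vectors whose
whole forward orbit lies in `W`. -/
def invariantCore (W : Submodule ℂ E) : Submodule ℂ E :=
  ⨅ w : List ι, W.comap (wordOp V w).toLinearMap

variable {W : Submodule ℂ E}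

lemma mem_invariantCore {x : E} : x ∈ invariantCore V W ↔ ∀ w, wordOp V w x ∈ W := by
  simp only [invariantCore, Submodule.mem_iInf, Submodule.mem_comap,
    ContinuousLinearMap.coe_coe]

lemma invariantCore_le : invariantCore V W ≤ W := fun _ hx => mem_invariantCore.1 hx []

lemma map_mem_invariantCore (a : ι) {x : E} (hx : x ∈ invariantCore V W) :
    V a x ∈ invariantCore V W :=
  mem_invariantCore.2 fun w => by
    simpa only [wordOp_append_apply, wordOp_cons_apply, wordOp_nil,
      one_apply_eq_self] using mem_invariantCore.1 hx (w ++ [a])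

lemma isClosed_invariantCore (hW : IsClosed (W : Set E)) :
    IsClosed (invariantCore V W : Set E) := by
  simp only [invariantCore, Submodule.coe_iInf]
  exact isClosed_iInter fun w => hW.preimage (wordOp V w).continuous

end Words

section RowIsometry

/-- A row-isometry: a family of isometries with pairwise orthogonal ranges. This is the relation
`V_a* V_b = δ_{a,b}` written without adjoints, so that it makes sense on incomplete spaces. -/
structure IsRowIsometry (V : ι → E →L[ℂ] E) : Prop where
  inner_map_map : ∀ a x y, ⟪V a x, V a y⟫ = ⟪x, y⟫
  inner_map_map_of_ne : ∀ {a b}, a ≠ b → ∀ x y, ⟪V a x, V b y⟫ = 0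

namespace IsRowIsometry

variable {V : ι → E →L[ℂ] E}

lemma norm_map (hV : IsRowIsometry V) (a : ι) (x : E) : ‖V a x‖ = ‖x‖ := by
  simp only [norm_eq_sqrt_re_inner (𝕜 := ℂ), hV.inner_map_map]

lemma inner_wordOp_wordOp (hV : IsRowIsometry V) (w : List ι) (x y : E) :
    ⟪wordOp V w x, wordOp V w y⟫ = ⟪x, y⟫ := by
  induction w with
  | nil => rfl
  | cons a w ih => rw [wordOp_cons_apply, wordOp_cons_apply, hV.inner_map_map, ih]

lemma norm_wordOp (hV : IsRowIsometry V) (w : List ι) (x : E) : ‖wordOp V w x‖ = ‖x‖ := by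
  simp only [norm_eq_sqrt_re_inner (𝕜 := ℂ), hV.inner_wordOp_wordOp]

lemma isWandering (hV : IsRowIsometry V) {x : E} (hx : ‖x‖ = 1)
    (horth : ∀ w ≠ [], ⟪x, wordOp V w x⟫ = 0) : IsWandering V x := by
  have hself : ⟪x, x⟫ = 1 := by simp [hx]
  refine ⟨hx, fun w => ?_⟩
  induction w with
  | nil =>
    rintro (_ | ⟨b, w'⟩)
    · simpa using hself
    · simpa using horth (b :: w') (List.cons_ne_nil _ _)
  | cons a w ih =>
    rintro (_ | ⟨b, w'⟩)
    · rw [if_neg (List.cons_ne_nil _ _), ← inner_conj_symm]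
      exact (map_eq_zero _).2 (horth (a :: w) (List.cons_ne_nil _ _))
    · rw [wordOp_cons_apply, wordOp_cons_apply]
      by_cases hab : a = b
      · subst hab
        simpa only [hV.inner_map_map, List.cons.injEq, true_and] using ih w'
      · rw [hV.inner_map_map_of_ne hab, if_neg fun h => hab (List.cons.inj h).1]

lemma orthogonalFamily (hV : IsRowIsometry V) :
    OrthogonalFamily ℂ (fun _ : ι => E)
      fun a => ⟨(V a).toLinearMap, hV.norm_map a⟩ :=
  fun _ _ hab => hV.inner_map_map_of_ne hab

lemma norm_sum_map_sq (hV : IsRowIsometry V) (s : Finset ι) (x : ι → E) :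
    ‖∑ a ∈ s, V a (x a)‖ ^ 2 = ∑ a ∈ s, ‖x a‖ ^ 2 :=
  hV.orthogonalFamily.norm_sum x s

lemma exists_isWandering_of_orthogonal {V : ι → E →L[ℂ] E} (hV : IsRowIsometry V)
    {L : Submodule ℂ E} (hL : ∀ a, ∀ x ∈ L, V a x ∈ L) {r : E} (hr : r ∈ L) (hr0 : r ≠ 0)
    (horth : ∀ a, ∀ x ∈ L, ⟪r, V a x⟫ = 0) : ∃ ζ ∈ L, IsWandering V ζ := by
  have hmem : (‖r‖⁻¹ : ℂ) • r ∈ L := L.smul_mem _ hr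
  refine ⟨_, hmem, hV.isWandering (norm_smul_inv_norm hr0) fun w hw => ?_⟩
  obtain ⟨a, w, rfl⟩ := List.exists_cons_of_ne_nil hw
  rw [wordOp_cons_apply, inner_smul_left, horth a _ (wordOp_mem hL w hmem), mul_zero]

variable [CompleteSpace H] {V : ι → H →L[ℂ] H}

lemma of_star_mul_eq_ite [DecidableEq ι]
    (h : ∀ a b, star (V a) * V b = if a = b then 1 else 0) : IsRowIsometry V := by
  have hinner : ∀ a b x y, ⟪V a x, V b y⟫ = ⟪x, (star (V a) * V b) y⟫ := fun a b x y => by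
    rw [mul_apply_eq_comp, ContinuousLinearMap.star_eq_adjoint,
      ContinuousLinearMap.adjoint_inner_right]
  constructor
  · intro a x y
    rw [hinner, h, if_pos rfl, one_apply_eq_self]
  · intro a b hab x y
    rw [hinner, h, if_neg hab, zero_apply, inner_zero_right]

lemma star_map_self (hV : IsRowIsometry V) (a : ι) (x : H) : star (V a) (V a x) = x :=
  ext_inner_left ℂ fun y => by
    rw [ContinuousLinearMap.star_eq_adjoint, ContinuousLinearMap.adjoint_inner_right,
      hV.inner_map_map]

lemma star_map_of_ne (hV : IsRowIsometry V) {a b : ι} (hab : a ≠ b) (x : H) :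
    star (V a) (V b x) = 0 :=
  ext_inner_left ℂ fun y => by
    rw [ContinuousLinearMap.star_eq_adjoint, ContinuousLinearMap.adjoint_inner_right,
      hV.inner_map_map_of_ne hab, inner_zero_right]

lemma star_sum_map (hV : IsRowIsometry V) {s : Finset ι} {a : ι} (ha : a ∈ s) (x : ι → H) :
    star (V a) (∑ b ∈ s, V b (x b)) = x a := by
  rw [map_sum, Finset.sum_eq_single_of_mem a ha fun b _ hba => hV.star_map_of_ne hba.symm _,
    hV.star_map_self]

lemma sum_norm_star_sq_le (hV : IsRowIsometry V) (s : Finset ι) (x : H) :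
    ∑ a ∈ s, ‖star (V a) x‖ ^ 2 ≤ ‖x‖ ^ 2 := by
  set p := ∑ a ∈ s, V a (star (V a) x) with hp
  have hnorm : ‖p‖ ^ 2 = ∑ a ∈ s, ‖star (V a) x‖ ^ 2 := hV.norm_sum_map_sq s _
  have hinner : ⟪p, x⟫ = (‖p‖ : ℂ) ^ 2 := by
    rw [← Complex.ofReal_pow, hnorm, hp, sum_inner]
    push_cast
    refine Finset.sum_congr rfl fun a _ => ?_
    rw [← ContinuousLinearMap.adjoint_inner_right, ← ContinuousLinearMap.star_eq_adjoint,
      inner_self_eq_norm_sq_to_K]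
    rfl
  have hle : ‖p‖ ^ 2 ≤ ‖p‖ * ‖x‖ := by
    simpa [hinner] using norm_inner_le_norm (𝕜 := ℂ) p x
  rw [← hnorm]
  nlinarith [norm_nonneg p, norm_nonneg x]

lemma le_topologicalClosure_iSup_map (hV : IsRowIsometry V) {L : Submodule ℂ H}
    (hcl : IsClosed (L : Set H)) (hL : ∀ a, ∀ x ∈ L, V a x ∈ L)
    (hwand : ∀ x ∈ L, ¬ IsWandering V x) :
    L ≤ (⨆ a, L.map (V a).toLinearMap).topologicalClosure := by
  set N := (⨆ a, L.map (V a).toLinearMap).topologicalClosure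
  have hmapN : ∀ a, ∀ x ∈ L, V a x ∈ N := fun a x hx =>
    Submodule.le_topologicalClosure _ (Submodule.mem_iSup_of_mem a ⟨x, hx, rfl⟩)
  have hNL : N ≤ L := Submodule.topologicalClosure_minimal _
    (iSup_le fun a => Submodule.map_le_iff_le_comap.2 (hL a)) hcl
  have : CompleteSpace N := (Submodule.isClosed_topologicalClosure _).completeSpace_coe
  intro x hx
  by_contra hxN
  have hr0 : x - N.starProjection x ≠ 0 := fun h =>
    hxN (sub_eq_zero.1 h ▸ Submodule.starProjection_apply_mem N x)
  obtain ⟨ζ, hζ, hζwand⟩ := hV.exists_isWandering_of_orthogonal hL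
    (L.sub_mem hx (hNL (Submodule.starProjection_apply_mem N x))) hr0
    fun a y hy => Submodule.starProjection_inner_eq_zero x _ (hmapN a y hy)
  exact hwand ζ hζ hζwand

lemma star_mem_of_forall_not_isWandering (hV : IsRowIsometry V) {L : Submodule ℂ H}
    (hcl : IsClosed (L : Set H)) (hL : ∀ a, ∀ x ∈ L, V a x ∈ L)
    (hwand : ∀ x ∈ L, ¬ IsWandering V x) (a : ι) {x : H} (hx : x ∈ L) :
    star (V a) x ∈ L := by
  have hmap : (⨆ b, L.map (V b).toLinearMap) ≤ L.comap (star (V a)).toLinearMap := by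
    refine iSup_le fun b => Submodule.map_le_iff_le_comap.2 fun y hy => ?_
    change star (V a) (V b y) ∈ L
    obtain rfl | hab := eq_or_ne a b
    · rwa [hV.star_map_self]
    · exact hV.star_map_of_ne hab y ▸ L.zero_mem
  exact Submodule.topologicalClosure_minimal _ hmap (hcl.preimage (star (V a)).continuous)
    (hV.le_topologicalClosure_iSup_map hcl hL hwand hx)

end IsRowIsometry

end RowIsometry

/-- The full Fock space over `ι`, realized as `ℓ²` of the set of words. -/
abbrev FockSpace (ι : Type*) := lp (fun _ : List ι => ℂ) 2

/-- The basis vector of the Fock space labelled by the word `w`. -/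
def wordVec (w : List ι) : FockSpace ι := lp.single 2 w 1

/-- The vacuum vector of the Fock space. -/
local notation "Ω" => wordVec []

section FockSpace

lemma exists_hilbertBasis_eq_wordVec :
    ∃ b : HilbertBasis (List ι) ℂ (FockSpace ι), ⇑b = wordVec :=
  ⟨.ofRepr (.refl ℂ _), funext fun w => (HilbertBasis.repr_symm_single _ w).symm⟩

lemma orthonormal_wordVec : Orthonormal ℂ (wordVec : List ι → FockSpace ι) := by
  obtain ⟨b, hb⟩ := exists_hilbertBasis_eq_wordVec (ι := ι)
  exact hb ▸ b.orthonormal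

lemma dense_span_wordVec :
    Dense (Submodule.span ℂ (Set.range (wordVec : List ι → FockSpace ι)) : Set (FockSpace ι)) := by
  obtain ⟨b, hb⟩ := exists_hilbertBasis_eq_wordVec (ι := ι)
  exact Submodule.dense_iff_topologicalClosure_eq_top.2 (hb ▸ b.dense_span)

lemma ext_inner_wordVec {f g : FockSpace ι} (h : ∀ w, ⟪wordVec w, f⟫ = ⟪wordVec w, g⟫) :
    f = g :=
  dense_span_wordVec.eq_of_inner_right (𝕜 := ℂ) fun v hv => by
    induction hv using Submodule.span_induction with
    | mem _ hx => obtain ⟨w, rfl⟩ := hx; exact h w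
    | zero => simp only [inner_zero_left]
    | add _ _ _ _ hx hy => simp only [inner_add_left, hx, hy]
    | smul _ _ _ hx => simp only [inner_smul_left, hx]

variable [CompleteSpace H]

/-- The isometry from the Fock space carrying the word basis to the orthonormal family `v`. -/
def fockIsometry {v : List ι → H} (hv : Orthonormal ℂ v) : FockSpace ι →ₗᵢ[ℂ] H :=
  hv.orthogonalFamily.linearIsometry

lemma fockIsometry_wordVec {v : List ι → H} (hv : Orthonormal ℂ v) (w : List ι) :
    fockIsometry hv (wordVec w) = v w := by
  rw [fockIsometry, wordVec, OrthogonalFamily.linearIsometry_apply_single,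
    LinearIsometry.toSpanSingleton_apply, one_smul]

/-- The left creation operator `L_a`, which prepends the letter `a` to every word. -/
def creation (a : ι) : FockSpace ι →L[ℂ] FockSpace ι :=
  (fockIsometry (orthonormal_wordVec.comp (a :: ·) List.cons_injective)).toContinuousLinearMap

lemma creation_wordVec (a : ι) (w : List ι) : creation a (wordVec w) = wordVec (a :: w) :=
  fockIsometry_wordVec (orthonormal_wordVec.comp (a :: ·) List.cons_injective) w

lemma star_creation_wordVec_of_not_prefix {a : ι} {w : List ι} (h : ∀ v, a :: v ≠ w) :
    star (creation a) (wordVec w) = 0 :=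
  ext_inner_wordVec fun v => by
    rw [ContinuousLinearMap.star_eq_adjoint, ContinuousLinearMap.adjoint_inner_right,
      creation_wordVec, orthonormal_wordVec.2 (h v), inner_zero_right]

lemma isRowIsometry_creation : IsRowIsometry (creation : ι → _) where
  inner_map_map a :=
    (fockIsometry (orthonormal_wordVec.comp (a :: ·) List.cons_injective)).inner_map_map
  inner_map_map_of_ne {a b} hab x y := by
    have hzero : star (creation a) ∘L creation b = 0 :=
      ContinuousLinearMap.ext_on dense_span_wordVec <| Set.forall_mem_range.2 fun w => by
        rw [ContinuousLinearMap.comp_apply, creation_wordVec,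
          star_creation_wordVec_of_not_prefix fun v h => hab (List.cons.inj h).1,
          zero_apply]
    rw [← ContinuousLinearMap.adjoint_inner_right, ← ContinuousLinearMap.star_eq_adjoint,
      ← ContinuousLinearMap.comp_apply, hzero, zero_apply, inner_zero_right]

lemma star_creation_vacuum (a : ι) : star (creation a) Ω = 0 :=
  star_creation_wordVec_of_not_prefix fun v => List.cons_ne_nil a v

lemma wordOp_creation_wordVec (w u : List ι) :
    wordOp creation w (wordVec u) = wordVec (w ++ u) := by
  induction w with
  | nil => rfl
  | cons a w ih => rw [wordOp_cons_apply, ih, creation_wordVec, List.cons_append]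

/-- The operator `R_u` appending the word `u` to every word. -/
def rightCreation (u : List ι) : FockSpace ι →L[ℂ] FockSpace ι :=
  (fockIsometry
    (orthonormal_wordVec.comp (· ++ u) (List.append_left_injective u))).toContinuousLinearMap

lemma rightCreation_wordVec (u w : List ι) : rightCreation u (wordVec w) = wordVec (w ++ u) :=
  fockIsometry_wordVec (orthonormal_wordVec.comp (· ++ u) (List.append_left_injective u)) w

lemma norm_adjoint_rightCreation_le (u : List ι) (f : FockSpace ι) :
    ‖((rightCreation u)†) f‖ ≤ ‖f‖ := by
  refine (((rightCreation u)†).le_of_opNorm_le ?_ f).trans_eq (one_mul _)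
  rw [LinearIsometryEquiv.norm_map]
  exact LinearIsometry.norm_toContinuousLinearMap_le _

lemma adjoint_rightCreation_wordVec_of_length_lt {u v : List ι} (h : v.length < u.length) :
    ((rightCreation u)†) (wordVec v) = 0 :=
  ext_inner_wordVec fun w => by
    rw [ContinuousLinearMap.adjoint_inner_right, rightCreation_wordVec, inner_zero_right]
    refine orthonormal_wordVec.2 fun hwu => ?_
    rw [← hwu, List.length_append] at h
    omega

lemma tendsto_adjoint_rightCreation {α : Type*} {l : Filter α} {u : α → List ι}
    (hu : Tendsto (fun k => (u k).length) l atTop) (f : FockSpace ι) :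
    Tendsto (fun k => ((rightCreation (u k))†) f) l (𝓝 0) := by
  have hequi : Equicontinuous fun k f => ((rightCreation (u k))†) f :=
    (LipschitzWith.uniformEquicontinuous _ 1 fun k =>
      AddMonoidHomClass.lipschitz_of_bound_nnnorm _ 1 fun f => by
        rw [one_mul]; exact norm_adjoint_rightCreation_le (u k) f).equicontinuous
  have hclosed := hequi.isClosed_setOfPred_tendsto (l := l) (f := fun _ => 0) continuous_const
  refine hclosed.closure_subset_iff.2 (fun g hg => ?_) (dense_span_wordVec f)
  induction hg using Submodule.span_induction with
  | mem _ hx =>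
    obtain ⟨v, rfl⟩ := hx
    refine tendsto_const_nhds.congr' ?_
    filter_upwards [hu.eventually_gt_atTop v.length] with k hk
    exact (adjoint_rightCreation_wordVec_of_length_lt hk).symm
  | zero => simpa only [Set.mem_ofPred_eq, map_zero] using tendsto_const_nhds
  | add _ _ _ _ hx hy => simpa only [Set.mem_ofPred_eq, map_add, add_zero] using hx.add hy
  | smul c _ _ hx => simpa only [Set.mem_ofPred_eq, map_smul, smul_zero] using hx.const_smul c

end FockSpace

section Intertwiners

/-- The operators intertwining the families `V` and `W`. -/
def intertwiners (V : ι → E →L[ℂ] E) (W : ι → F →L[ℂ] F) : Submodule ℂ (E →L[ℂ] F) where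
  carrier := {X | ∀ a x, X (V a x) = W a (X x)}
  add_mem' hX hY a x := by simp only [add_apply, map_add, hX a, hY a]
  zero_mem' a x := by simp only [zero_apply, map_zero]
  smul_mem' c X hX a x := by simp only [smul_apply, map_smul, hX a]

namespace intertwiners

lemma comp_mem {U : ι → E →L[ℂ] E} {V : ι → F →L[ℂ] F} {W : ι → H →L[ℂ] H}
    {Y : F →L[ℂ] H} {X : E →L[ℂ] F} (hY : Y ∈ intertwiners V W) (hX : X ∈ intertwiners U V) :
    Y ∘L X ∈ intertwiners U W := fun a x => by
  simp only [ContinuousLinearMap.comp_apply, hX a, hY a]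

lemma map_wordOp {V : ι → E →L[ℂ] E} {W : ι → F →L[ℂ] F} {X : E →L[ℂ] F}
    (hX : X ∈ intertwiners V W) (w : List ι) (x : E) :
    X (wordOp V w x) = wordOp W w (X x) := by
  induction w with
  | nil => rfl
  | cons a w ih => rw [wordOp_cons_apply, wordOp_cons_apply, hX a, ih]

variable {V : ι → H →L[ℂ] H} {X : FockSpace ι →L[ℂ] H}

lemma map_wordVec_append (hX : X ∈ intertwiners creation V) (w u : List ι) :
    X (wordVec (w ++ u)) = wordOp V w (X (wordVec u)) := by
  rw [← wordOp_creation_wordVec, map_wordOp hX]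

lemma map_wordVec (hX : X ∈ intertwiners creation V) (w : List ι) :
    X (wordVec w) = wordOp V w (X Ω) := by
  rw [← map_wordVec_append hX, List.append_nil]

variable [CompleteSpace H]

lemma adjoint_map (hV : IsRowIsometry V) (hX : X ∈ intertwiners creation V) (a : ι) (z : H) :
    (X†) (V a z) = ⟪X Ω, V a z⟫ • Ω + creation a ((X†) z) := by
  refine ext_inner_wordVec fun w => ?_
  rw [ContinuousLinearMap.adjoint_inner_right, inner_add_right, inner_smul_right]
  rcases w with _ | ⟨b, w⟩
  · rw [← ContinuousLinearMap.adjoint_inner_left (creation a),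
      ← ContinuousLinearMap.star_eq_adjoint, star_creation_vacuum, inner_zero_left, add_zero,
      inner_self_eq_one_of_norm_eq_one (orthonormal_wordVec.1 []), mul_one]
  · rw [orthonormal_wordVec.2 (List.cons_ne_nil b w), mul_zero, zero_add, ← creation_wordVec, hX b]
    obtain rfl | hab := eq_or_ne b a
    · rw [hV.inner_map_map, isRowIsometry_creation.inner_map_map,
        ContinuousLinearMap.adjoint_inner_right]
    · rw [hV.inner_map_map_of_ne hab, isRowIsometry_creation.inner_map_map_of_ne hab]

lemma star_creation_adjoint (hX : X ∈ intertwiners creation V) (a : ι) (z : H) :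
    star (creation a) ((X†) z) = (X†) (star (V a) z) :=
  ext_inner_right ℂ fun f => by
    simp only [ContinuousLinearMap.star_eq_adjoint, ContinuousLinearMap.adjoint_inner_left, hX a]

end intertwiners

lemma mem_intertwiners_of_forall_wordVec {V : ι → H →L[ℂ] H} {X : FockSpace ι →L[ℂ] H}
    (h : ∀ a w, X (wordVec (a :: w)) = V a (X (wordVec w))) : X ∈ intertwiners creation V :=
  fun a f => by
    have hcomp : X ∘L creation a = V a ∘L X :=
      ContinuousLinearMap.ext_on dense_span_wordVec <| Set.forall_mem_range.2 fun w => by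
        simp only [ContinuousLinearMap.comp_apply, creation_wordVec, h]
    exact DFunLike.congr_fun hcomp f

lemma rightCreation_mem_intertwiners (u : List ι) :
    rightCreation u ∈ intertwiners creation creation :=
  mem_intertwiners_of_forall_wordVec fun a w => by
    simp only [rightCreation_wordVec, creation_wordVec, List.cons_append]

lemma IsWandering.exists_isometry_mem_intertwiners [CompleteSpace H] {V : ι → H →L[ℂ] H} {ζ : H}
    (hζ : IsWandering V ζ) : ∃ X : FockSpace ι →ₗᵢ[ℂ] H,
      X.toContinuousLinearMap ∈ intertwiners creation V ∧ X Ω = ζ :=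
  have horth : Orthonormal ℂ fun w => wordOp V w ζ := orthonormal_iff_ite.2 hζ.2
  ⟨fockIsometry horth, mem_intertwiners_of_forall_wordVec fun a w => by
    simp only [LinearIsometry.coe_toContinuousLinearMap, fockIsometry_wordVec, wordOp_cons_apply],
    fockIsometry_wordVec horth []⟩

end Intertwiners

section BesselVectors

variable {V : ι → H →L[ℂ] H}

lemma exists_forall_length_ge_inner_eq_zero {g : FockSpace ι}
    (hg : g ∈ Submodule.span ℂ (Set.range wordVec)) :
    ∃ k : ℕ, ∀ w : List ι, k ≤ w.length → ⟪wordVec w, g⟫ = 0 := by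
  induction hg using Submodule.span_induction with
  | mem _ hx =>
    obtain ⟨v, rfl⟩ := hx
    refine ⟨v.length + 1, fun w hw => orthonormal_wordVec.2 ?_⟩
    rintro rfl
    omega
  | zero => exact ⟨0, fun w _ => inner_zero_right _⟩
  | add x y _ _ hx hy =>
    obtain ⟨⟨k, hk⟩, l, hl⟩ := hx, hy
    refine ⟨max k l, fun w hw => ?_⟩
    rw [inner_add_right, hk w (le_of_max_le_left hw), hl w (le_of_max_le_right hw), add_zero]
  | smul c x _ hx =>
    obtain ⟨k, hk⟩ := hx
    exact ⟨k, fun w hw => by rw [inner_smul_right, hk w hw, mul_zero]⟩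

variable (V) in
/-- The vectors `y` for which `e_w ↦ V_w y` extends to a bounded operator on the Fock space, encoded
as the values of intertwiners at the vacuum vector. -/
def besselVectors : Submodule ℂ H :=
  (intertwiners creation V).map (ContinuousLinearMap.apply ℂ H (Ω : FockSpace ι)).toLinearMap

lemma map_mem_besselVectors (a : ι) {y : H} (hy : y ∈ besselVectors V) :
    V a y ∈ besselVectors V := by
  obtain ⟨X, hX, rfl⟩ := hy
  refine ⟨X ∘L rightCreation [a], intertwiners.comp_mem hX (rightCreation_mem_intertwiners _), ?_⟩
  change X (rightCreation [a] Ω) = V a (X Ω)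
  rw [rightCreation_wordVec, List.nil_append, ← creation_wordVec, hX]

variable [CompleteSpace H]

lemma mul_norm_le_norm_adjoint_sub_of_mem_iSup_map (hV : IsRowIsometry V) {L : Submodule ℂ H}
    {X : FockSpace ι →L[ℂ] H} (hX : X ∈ intertwiners creation V) {ε : ℝ} (hε : 0 ≤ ε)
    {g : FockSpace ι} (hg : ∀ a, ∀ x ∈ L, ε * ‖x‖ ≤ ‖(X†) x - star (creation a) g‖) {x : H}
    (hx : x ∈ ⨆ a, L.map (V a).toLinearMap) : ε * ‖x‖ ≤ ‖(X†) x - g‖ := by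
  obtain ⟨c, hc, rfl⟩ := (Submodule.mem_iSup_iff_exists_finsupp _ _).1 hx
  choose l hlL hlc using hc
  have hsum : (c.sum fun _ y => y) = ∑ a ∈ c.support, V a (l a) :=
    Finset.sum_congr rfl fun a _ => (hlc a).symm
  rw [hsum]
  set y := ∑ a ∈ c.support, V a (l a)
  refine (sq_le_sq₀ (by positivity) (norm_nonneg _)).1 ?_
  calc (ε * ‖y‖) ^ 2 = ∑ a ∈ c.support, (ε * ‖l a‖) ^ 2 := by
        simp only [y, mul_pow, hV.norm_sum_map_sq, Finset.mul_sum]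
    _ ≤ ∑ a ∈ c.support, ‖star (creation a) ((X†) y - g)‖ ^ 2 := by
        refine Finset.sum_le_sum fun a ha => ?_
        rw [map_sub, intertwiners.star_creation_adjoint hX, hV.star_sum_map ha]
        exact pow_le_pow_left₀ (by positivity) (hg a _ (hlL a)) 2
    _ ≤ ‖(X†) y - g‖ ^ 2 := isRowIsometry_creation.sum_norm_star_sq_le _ _

/-- Iterating the Wold-type decomposition `L = ⊕ V_a L`, a lower bound of `X†` on `L` persists
after all words of bounded length have been discarded; but their complements shrink to zero. -/
lemma exists_norm_adjoint_lt_mul_norm (hV : IsRowIsometry V) {L : Submodule ℂ H}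
    (hcl : IsClosed (L : Set H)) (hL : ∀ a, ∀ x ∈ L, V a x ∈ L)
    (hwand : ∀ x ∈ L, ¬ IsWandering V x) (hbot : L ≠ ⊥) {X : FockSpace ι →L[ℂ] H}
    (hX : X ∈ intertwiners creation V) {ε : ℝ} (hε : 0 < ε) :
    ∃ x ∈ L, ‖(X†) x‖ < ε * ‖x‖ := by
  by_contra! hbelow
  have hdiscard : ∀ (k : ℕ) (g : FockSpace ι),
      (∀ w : List ι, k ≤ w.length → ⟪wordVec w, g⟫ = 0) →
      ∀ x ∈ L, ε * ‖x‖ ≤ ‖(X†) x - g‖ := by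
    intro k
    induction k with
    | zero =>
      intro g hg x hx
      obtain rfl : g = 0 := ext_inner_wordVec fun w => by
        rw [hg w (Nat.zero_le _), inner_zero_right]
      simpa only [sub_zero] using hbelow x hx
    | succ k ih =>
      intro g hg x hx
      have hstar : ∀ a, ∀ x ∈ L, ε * ‖x‖ ≤ ‖(X†) x - star (creation a) g‖ := fun a =>
        ih _ fun w hw => by
          rw [ContinuousLinearMap.star_eq_adjoint, ContinuousLinearMap.adjoint_inner_right,
            creation_wordVec, hg (a :: w) (Nat.succ_le_succ hw)]
      have hclosed : IsClosed {x : H | ε * ‖x‖ ≤ ‖(X†) x - g‖} :=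
        isClosed_le (by fun_prop) (by fun_prop)
      exact hclosed.closure_subset_iff.2
        (fun _ => mul_norm_le_norm_adjoint_sub_of_mem_iSup_map hV hX hε.le hstar)
        (hV.le_topologicalClosure_iSup_map hcl hL hwand hx)
  obtain ⟨x, hxL, hx0⟩ := Submodule.exists_mem_ne_zero_of_ne_bot hbot
  obtain ⟨g, hgspan, hg⟩ := dense_span_wordVec.exists_dist_lt ((X†) x)
    (mul_pos hε (norm_pos_iff.2 hx0))
  obtain ⟨k, hk⟩ := exists_forall_length_ge_inner_eq_zero hgspan
  exact (hdiscard k g hk x hxL).not_gt (dist_eq_norm ((X†) x) g ▸ hg)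

lemma exists_mem_intertwiners_norm_adjoint_lt (hV : IsRowIsometry V)
    (hwand : ∀ x, ¬ IsWandering V x) (hbot : besselVectors V ≠ ⊥) {X : FockSpace ι →L[ℂ] H}
    (hX : X ∈ intertwiners creation V) {ε : ℝ} (hε : 0 < ε) :
    ∃ Y ∈ intertwiners creation V, ‖Y Ω‖ = 1 ∧ ‖(X†) (Y Ω)‖ < ε := by
  set L := (besselVectors V).topologicalClosure
  have hL : ∀ a, ∀ x ∈ L, V a x ∈ L := fun a x hx =>
    map_mem_closure (V a).continuous hx fun _ => map_mem_besselVectors a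
  have hL0 : L ≠ ⊥ := fun h => hbot (le_bot_iff.1 (h ▸ Submodule.le_topologicalClosure _))
  obtain ⟨x, hx, hxlt⟩ := exists_norm_adjoint_lt_mul_norm hV
    (Submodule.isClosed_topologicalClosure _) hL (fun x _ => hwand x) hL0 hX hε
  have hopen : IsOpen {y : H | ‖(X†) y‖ < ε * ‖y‖} := isOpen_lt (by fun_prop) (by fun_prop)
  obtain ⟨_, hylt, Y, hY, rfl⟩ := mem_closure_iff.1 hx _ hopen hxlt
  change ‖(X†) (Y Ω)‖ < ε * ‖Y Ω‖ at hylt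
  have hpos : 0 < ‖Y Ω‖ := pos_of_mul_pos_right ((norm_nonneg _).trans_lt hylt) hε.le
  refine ⟨(‖Y Ω‖⁻¹ : ℂ) • Y, Submodule.smul_mem _ _ hY,
    norm_smul_inv_norm (norm_pos_iff.1 hpos), ?_⟩
  rw [smul_apply, map_smul, norm_smul, norm_inv, Complex.norm_real, norm_norm,
    inv_mul_lt_iff₀ hpos, mul_comm]
  exact hylt

end BesselVectors

section MarkedWords

variable {V : ι → H →L[ℂ] H} {a b : ι}

/-- The word `ab…b` with `k` letters `b`. For `a ≠ b` no proper suffix of it is a prefix, so these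
words push vectors far away without creating overlaps. -/
def markedWord (a b : ι) (k : ℕ) : List ι := a :: List.replicate k b

lemma tendsto_length_markedWord (a b : ι) :
    Tendsto (fun k => (markedWord a b k).length) atTop atTop := by
  simp only [markedWord, List.length_cons, List.length_replicate]
  exact tendsto_add_atTop_nat 1

lemma intertwiners.comp_rightCreation_vacuum {X : FockSpace ι →L[ℂ] H}
    (hX : X ∈ intertwiners creation V) (u : List ι) :
    (X ∘L rightCreation u) Ω = wordOp V u (X Ω) := by
  rw [ContinuousLinearMap.comp_apply, rightCreation_wordVec, List.nil_append, map_wordVec hX]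

variable [CompleteSpace H]

lemma IsRowIsometry.star_wordOp_markedWord (hV : IsRowIsometry V) (hab : a ≠ b) (k : ℕ) (x : H) :
    star (V b) (wordOp V (markedWord a b k) x) = 0 := by
  rw [markedWord, wordOp_cons_apply, hV.star_map_of_ne hab.symm]

namespace intertwiners

variable {X : FockSpace ι →L[ℂ] H}

lemma adjoint_wordOp_replicate (hV : IsRowIsometry V) (hX : X ∈ intertwiners creation V)
    (hb : star (V b) (X Ω) = 0) (k : ℕ) (z : H) :
    (X†) (wordOp V (List.replicate k b) z) = wordOp creation (List.replicate k b) ((X†) z) := by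
  induction k with
  | zero => rfl
  | succ k ih =>
    rw [List.replicate_succ, wordOp_cons_apply, wordOp_cons_apply, adjoint_map hV hX, ih,
      ← ContinuousLinearMap.adjoint_inner_left, ← ContinuousLinearMap.star_eq_adjoint, hb,
      inner_zero_left, zero_smul, zero_add]

lemma adjoint_wordOp_markedWord (hV : IsRowIsometry V) (hX : X ∈ intertwiners creation V)
    (hb : star (V b) (X Ω) = 0) (k : ℕ) (z : H) :
    (X†) (wordOp V (markedWord a b k) z) =
      ⟪X Ω, wordOp V (markedWord a b k) z⟫ • Ω +
        wordOp creation (markedWord a b k) ((X†) z) := by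
  simp only [markedWord, wordOp_cons_apply, adjoint_map hV hX a, adjoint_wordOp_replicate hV hX hb]

end intertwiners

lemma tendsto_adjoint_comp_rightCreation (X : FockSpace ι →L[ℂ] H) {u : ℕ → List ι}
    (hu : Tendsto (fun k => (u k).length) atTop atTop) (z : H) :
    Tendsto (fun k => ((X ∘L rightCreation (u k))†) z) atTop (𝓝 0) := by
  simpa only [ContinuousLinearMap.adjoint_comp, ContinuousLinearMap.comp_apply]
    using tendsto_adjoint_rightCreation hu ((X†) z)

lemma tendsto_inner_comp_rightCreation (X : FockSpace ι →L[ℂ] H) {u : ℕ → List ι}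
    (hu : Tendsto (fun k => (u k).length) atTop atTop) (z : H) (f : FockSpace ι) :
    Tendsto (fun k => ⟪z, (X ∘L rightCreation (u k)) f⟫) atTop (𝓝 0) := by
  simpa only [ContinuousLinearMap.adjoint_inner_left, inner_zero_left]
    using (tendsto_adjoint_comp_rightCreation X hu z).inner (𝕜 := ℂ)
      (tendsto_const_nhds (x := f))

variable {X Y : FockSpace ι →L[ℂ] H}

lemma tendsto_adjoint_comp_markedWord_self (hV : IsRowIsometry V) (hab : a ≠ b)
    (hX : X ∈ intertwiners creation V) (hX1 : ‖X Ω‖ = 1) :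
    Tendsto (fun k => ((X ∘L rightCreation (markedWord a b k))†)
      ((X ∘L rightCreation (markedWord a b k)) Ω)) atTop (𝓝 Ω) := by
  have hmain : ∀ k, ((X ∘L rightCreation (markedWord a b k))†)
      ((X ∘L rightCreation (markedWord a b k)) Ω) = Ω + wordOp creation (markedWord a b k)
        (((X ∘L rightCreation (markedWord a b k))†) (X Ω)) := fun k => by
    have hY := intertwiners.comp_mem hX (rightCreation_mem_intertwiners (markedWord a b k))
    have hvac := intertwiners.comp_rightCreation_vacuum hX (markedWord a b k)
    rw [hvac, intertwiners.adjoint_wordOp_markedWord hV hY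
      (hvac ▸ hV.star_wordOp_markedWord hab k _), hvac, hV.inner_wordOp_wordOp,
      inner_self_eq_one_of_norm_eq_one hX1, one_smul]
  have hzero : Tendsto (fun k => wordOp creation (markedWord a b k)
      (((X ∘L rightCreation (markedWord a b k))†) (X Ω))) atTop (𝓝 0) := by
    refine squeeze_zero_norm (fun k => (isRowIsometry_creation.norm_wordOp _ _).le)
      (tendsto_zero_iff_norm_tendsto_zero.1 ?_)
    exact tendsto_adjoint_comp_rightCreation X (tendsto_length_markedWord a b) (X Ω)
  simpa only [hmain, add_zero] using hzero.const_add Ω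

lemma tendsto_adjoint_comp_markedWord_sub (hV : IsRowIsometry V)
    (hX : X ∈ intertwiners creation V) (hb : star (V b) (X Ω) = 0)
    (hY : Y ∈ intertwiners creation V) :
    Tendsto (fun k => (X†) ((Y ∘L rightCreation (markedWord a b k)) Ω) -
      wordOp creation (markedWord a b k) ((X†) (Y Ω))) atTop (𝓝 0) := by
  have hinner := tendsto_inner_comp_rightCreation Y (tendsto_length_markedWord a b) (X Ω) Ω
  simpa only [intertwiners.comp_rightCreation_vacuum hY,
    intertwiners.adjoint_wordOp_markedWord hV hX hb, add_sub_cancel_right, zero_smul]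
    using hinner.smul_const (Ω : FockSpace ι)

/-- Asymptotic commutation with the creation operators determines `T k f` from `T k Ω`: write `f`
as `A Ω` for a polynomial `A` in the creation operators. -/
lemma exists_tendsto_sub_of_tendsto_sub_creation {f : FockSpace ι}
    (hf : f ∈ Submodule.span ℂ (Set.range wordVec)) :
    ∃ A : FockSpace ι →L[ℂ] FockSpace ι, A Ω = f ∧
      ∀ T : ℕ → FockSpace ι →L[ℂ] FockSpace ι,
        (∀ c w, Tendsto (fun k => T k (wordVec (c :: w)) - creation c (T k (wordVec w)))
          atTop (𝓝 0)) →
        Tendsto (fun k => T k f - A (T k Ω)) atTop (𝓝 0) := by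
  induction hf using Submodule.span_induction with
  | mem _ hx =>
    obtain ⟨w, rfl⟩ := hx
    refine ⟨wordOp creation w, by rw [wordOp_creation_wordVec, List.append_nil], fun T hT => ?_⟩
    induction w with
    | nil => simp
    | cons c w ih =>
      have htail := ((creation c).continuous.tendsto 0).comp ih
      simpa only [Function.comp_def, map_sub, wordOp_cons_apply, map_zero, sub_add_sub_cancel,
        add_zero] using (hT c w).add htail
  | zero => exact ⟨0, rfl, fun T _ => by simp⟩
  | add x y _ _ hx hy =>
    obtain ⟨⟨A, hA, hAT⟩, B, hB, hBT⟩ := hx, hy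
    refine ⟨A + B, by rw [add_apply, hA, hB], fun T hT => ?_⟩
    simpa only [map_add, add_apply, add_sub_add_comm, add_zero] using (hAT T hT).add (hBT T hT)
  | smul c x _ hx =>
    obtain ⟨A, hA, hAT⟩ := hx
    refine ⟨c • A, by rw [smul_apply, hA], fun T hT => ?_⟩
    simpa only [map_smul, smul_apply, smul_sub, smul_zero] using (hAT T hT).const_smul c

lemma intertwiners.adjoint_map_wordVec_cons_sub (hV : IsRowIsometry V)
    (hX : X ∈ intertwiners creation V) (hY : Y ∈ intertwiners creation V) (c : ι) (w : List ι) :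
    (X† ∘L Y) (wordVec (c :: w)) - creation c ((X† ∘L Y) (wordVec w)) =
      ⟪X Ω, Y (wordVec (c :: w))⟫ • Ω := by
  rw [ContinuousLinearMap.comp_apply, ContinuousLinearMap.comp_apply, ← creation_wordVec, hY,
    adjoint_map hV hX, add_sub_cancel_right]

lemma tendsto_adjoint_comp_markedWord_apply_self (hV : IsRowIsometry V) (hab : a ≠ b)
    (hX : X ∈ intertwiners creation V) (hX1 : ‖X Ω‖ = 1) {f : FockSpace ι}
    (hf : f ∈ Submodule.span ℂ (Set.range wordVec)) :
    Tendsto (fun k => ((X ∘L rightCreation (markedWord a b k))†)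
      ((X ∘L rightCreation (markedWord a b k)) f)) atTop (𝓝 f) := by
  obtain ⟨A, hA, hAT⟩ := exists_tendsto_sub_of_tendsto_sub_creation hf
  set Y := fun k => X ∘L rightCreation (markedWord a b k)
  have hY : ∀ k, Y k ∈ intertwiners creation V := fun k =>
    intertwiners.comp_mem hX (rightCreation_mem_intertwiners _)
  have hvac : Tendsto (fun k => ((Y k)†) (Y k Ω)) atTop (𝓝 Ω) :=
    tendsto_adjoint_comp_markedWord_self hV hab hX hX1
  have hsub := hAT (fun k => (Y k)† ∘L Y k) fun c w => by
    have hinner : Tendsto (fun k => ⟪Y k Ω, Y k (wordVec (c :: w))⟫) atTop (𝓝 0) := by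
      simpa only [ContinuousLinearMap.adjoint_inner_left,
        orthonormal_wordVec.2 (List.cons_ne_nil c w).symm]
        using hvac.inner (𝕜 := ℂ) (tendsto_const_nhds (x := wordVec (c :: w)))
    simpa only [intertwiners.adjoint_map_wordVec_cons_sub hV (hY _) (hY _), zero_smul]
      using hinner.smul_const (Ω : FockSpace ι)
  change Tendsto (fun k => ((Y k)†) (Y k f)) atTop (𝓝 f)
  simpa only [Function.comp_def, ContinuousLinearMap.comp_apply, sub_add_cancel, hA, zero_add]
    using hsub.add ((A.continuous.tendsto _).comp hvac)

lemma exists_eventually_norm_adjoint_comp_markedWord_lt (hV : IsRowIsometry V)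
    (hX : X ∈ intertwiners creation V) (hb : star (V b) (X Ω) = 0) {f : FockSpace ι}
    (hf : f ∈ Submodule.span ℂ (Set.range wordVec)) :
    ∃ C : ℝ, 0 ≤ C ∧ ∀ Y ∈ intertwiners creation V, ∀ ε > 0, ∀ᶠ k in atTop,
      ‖(X†) ((Y ∘L rightCreation (markedWord a b k)) f)‖ < C * ‖(X†) (Y Ω)‖ + ε := by
  obtain ⟨A, -, hAT⟩ := exists_tendsto_sub_of_tendsto_sub_creation hf
  refine ⟨‖A‖, norm_nonneg A, fun Y hY ε hε => ?_⟩
  set Z := fun k => Y ∘L rightCreation (markedWord a b k)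
  set p := fun k => wordOp creation (markedWord a b k) ((X†) (Y Ω))
  have hZ : ∀ k, Z k ∈ intertwiners creation V := fun k =>
    intertwiners.comp_mem hY (rightCreation_mem_intertwiners _)
  have hvac : Tendsto (fun k => (X†) (Z k Ω) - p k) atTop (𝓝 0) :=
    tendsto_adjoint_comp_markedWord_sub hV hX hb hY
  have hsub := hAT (fun k => X† ∘L Z k) fun c w => by
    simpa only [intertwiners.adjoint_map_wordVec_cons_sub hV hX (hZ _), zero_smul]
      using (tendsto_inner_comp_rightCreation Y (tendsto_length_markedWord a b) (X Ω)
        (wordVec (c :: w))).smul_const (Ω : FockSpace ι)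
  have hdiff : Tendsto (fun k => (X†) (Z k f) - A (p k)) atTop (𝓝 0) := by
    simpa only [Function.comp_def, map_sub, map_zero, ContinuousLinearMap.comp_apply,
      sub_add_sub_cancel, add_zero] using hsub.add ((A.continuous.tendsto 0).comp hvac)
  have hp : ∀ k, ‖A (p k)‖ ≤ ‖A‖ * ‖(X†) (Y Ω)‖ := fun k =>
    (A.le_opNorm _).trans_eq (by rw [isRowIsometry_creation.norm_wordOp])
  filter_upwards [hdiff.norm.eventually_lt_const (norm_zero.trans_lt hε)] with k hk
  linarith [norm_le_norm_add_norm_sub' ((X†) (Z k f)) (A (p k)), hp k]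

lemma exists_mem_intertwiners_almost_isometric (hV : IsRowIsometry V)
    (hwand : ∀ x, ¬ IsWandering V x) (hbot : besselVectors V ≠ ⊥) (hab : a ≠ b)
    (hX : X ∈ intertwiners creation V) (hb : star (V b) (X Ω) = 0) {f : FockSpace ι}
    (hf : f ∈ Submodule.span ℂ (Set.range wordVec)) (z : H) {ε : ℝ} (hε : 0 < ε) :
    ∃ Y ∈ intertwiners creation V, star (V b) (Y Ω) = 0 ∧ ‖Y Ω‖ = 1 ∧
      ‖(Y†) z‖ < ε ∧ ‖(Y†) (Y f) - f‖ < ε ∧ ‖(X†) (Y f)‖ < ε := by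
  obtain ⟨C, hC, hCX⟩ :=
    exists_eventually_norm_adjoint_comp_markedWord_lt (a := a) hV hX hb hf
  obtain ⟨Y, hY, hY1, hXY⟩ := exists_mem_intertwiners_norm_adjoint_lt hV hwand hbot hX
    (ε := ε / (2 * (C + 1))) (by positivity)
  have hCε : C * ‖(X†) (Y Ω)‖ + ε / 2 ≤ ε := by
    rw [lt_div_iff₀ (by positivity)] at hXY
    nlinarith [norm_nonneg ((X†) (Y Ω))]
  have hz := tendsto_adjoint_comp_rightCreation Y (tendsto_length_markedWord a b) z
  have hff := tendsto_adjoint_comp_markedWord_apply_self hV hab hY hY1 hf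
  obtain ⟨k, hkX, hkz, hkf⟩ := ((hCX Y hY _ (half_pos hε)).and
    ((hz.norm.eventually_lt_const (norm_zero.trans_lt hε)).and
      ((tendsto_iff_norm_sub_tendsto_zero.1 hff).eventually_lt_const hε))).exists
  have hvac := intertwiners.comp_rightCreation_vacuum hY (markedWord a b k)
  refine ⟨_, intertwiners.comp_mem hY (rightCreation_mem_intertwiners (markedWord a b k)),
    ?_, ?_, hkz, hkf, hkX.trans_le hCε⟩
  · rw [hvac, hV.star_wordOp_markedWord hab]
  · rw [hvac, hV.norm_wordOp, hY1]

end MarkedWords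

section ExistenceOfWanderingVectors

lemma exists_tendsto_of_forall_exists_dist_le {P : Type*} [PseudoMetricSpace P] [CompleteSpace P]
    {S : ℕ → Set P} (h0 : (S 0).Nonempty) {C r : ℝ} (hr : r < 1)
    (hS : ∀ n, ∀ p ∈ S n, ∃ q ∈ S (n + 1), dist p q ≤ C * r ^ n) :
    ∃ (s : ℕ → P) (p : P), (∀ n, s n ∈ S n) ∧ Tendsto s atTop (𝓝 p) := by
  obtain ⟨p₀, hp₀⟩ := h0
  choose! next hmem hdist using hS
  let s : ℕ → P := fun n => Nat.rec p₀ next n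
  have hs : ∀ n, s n ∈ S n := fun n => by
    induction n with
    | zero => exact hp₀
    | succ n ih => exact hmem n _ ih
  obtain ⟨p, hp⟩ := cauchySeq_tendsto_of_complete
    (cauchySeq_of_le_geometric r C hr fun n => hdist n _ (hs n))
  exact ⟨s, p, hs, hp⟩

variable [CompleteSpace H] {V : ι → H →L[ℂ] H}

lemma norm_map_le_norm_add_of_norm_adjoint_sub_le [CompleteSpace E] {Y : E →L[ℂ] H} {f : E}
    {ε : ℝ} (h : ‖(Y†) (Y f) - f‖ ≤ ε) : ‖Y f‖ ≤ ‖f‖ + ε := by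
  have hε : 0 ≤ ε := (norm_nonneg _).trans h
  have hsq : ‖Y f‖ ^ 2 ≤ ‖f‖ * (‖f‖ + ε) := by
    calc ‖Y f‖ ^ 2 = ‖⟪f, (Y†) (Y f)⟫‖ := by
          rw [ContinuousLinearMap.adjoint_inner_right, inner_self_eq_norm_sq_to_K]
          simp
      _ ≤ ‖f‖ * ‖(Y†) (Y f)‖ := norm_inner_le_norm _ _
      _ ≤ ‖f‖ * (‖f‖ + ε) := by
          gcongr
          linarith [norm_le_norm_add_norm_sub' ((Y†) (Y f)) f]
  refine (sq_le_sq₀ (norm_nonneg _) (by positivity)).1 (hsq.trans ?_)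
  rw [sq]
  gcongr
  linarith

/-- One step of the iteration. With `f` a finitely supported approximation of the error
`Ω - X† z` and `Y` almost isometric, replace `X` by `X + τ Y` and `z` by `z + τ⁻¹ Y f`: the product
of the two corrections contributes `Y† Y f ≈ f`, while the cross terms are negligible. -/
lemma exists_improvement (hV : IsRowIsometry V) (hwand : ∀ x, ¬ IsWandering V x)
    (hbot : besselVectors V ≠ ⊥) {a b : ι} (hab : a ≠ b) {X : FockSpace ι →L[ℂ] H}
    (hX : X ∈ intertwiners creation V) (hb : star (V b) (X Ω) = 0) {z : H} {τ : ℝ} (hτ : 0 < τ)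
    (hz : ‖Ω - (X†) z‖ ≤ τ ^ 2) :
    ∃ X' ∈ intertwiners creation V, ∃ z', star (V b) (X' Ω) = 0 ∧
      ‖X Ω - X' Ω‖ ≤ 2 * τ ∧ ‖z - z'‖ ≤ 2 * τ ∧ ‖Ω - (X'†) z'‖ ≤ (τ / 2) ^ 2 := by
  have hpos : 0 < 2 + τ + τ⁻¹ := by positivity
  obtain ⟨ε, hε, hεerr, hετ⟩ : ∃ ε > 0, ε * (2 + τ + τ⁻¹) ≤ (τ / 2) ^ 2 ∧ 2 * ε ≤ τ ^ 2 := by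
    refine ⟨(τ / 2) ^ 2 / (2 + τ + τ⁻¹), by positivity, (div_mul_cancel₀ _ hpos.ne').le, ?_⟩
    have hle : (τ / 2) ^ 2 / (2 + τ + τ⁻¹) ≤ (τ / 2) ^ 2 :=
      div_le_self (by positivity) (by linarith [inv_pos.2 hτ])
    nlinarith
  obtain ⟨f, hfspan, hf⟩ := dense_span_wordVec.exists_dist_lt (Ω - (X†) z) hε
  rw [dist_eq_norm] at hf
  obtain ⟨Y, hY, hYb, hY1, hYz, hYf, hXY⟩ :=
    exists_mem_intertwiners_almost_isometric hV hwand hbot hab hX hb hfspan z hε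
  refine ⟨X + (τ : ℂ) • Y, add_mem hX (Submodule.smul_mem _ _ hY), z + (τ⁻¹ : ℂ) • Y f,
    ?_, ?_, ?_, ?_⟩
  · rw [add_apply, smul_apply, map_add, map_smul, hb, hYb, smul_zero, add_zero]
  · rw [add_apply, smul_apply, sub_add_cancel_left, norm_neg, norm_smul, hY1, mul_one,
      Complex.norm_of_nonneg hτ.le]
    linarith
  · have hYfτ : ‖Y f‖ ≤ 2 * τ ^ 2 := by
      linarith [norm_map_le_norm_add_of_norm_adjoint_sub_le hYf.le,
        norm_le_norm_add_norm_sub (Ω - (X†) z) f]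
    rw [sub_add_cancel_left, norm_neg, norm_smul, norm_inv, Complex.norm_of_nonneg hτ.le,
      inv_mul_le_iff₀ hτ]
    linarith
  · have herr : Ω - ((X + (τ : ℂ) • Y)†) (z + (τ⁻¹ : ℂ) • Y f) =
        ((Ω - (X†) z - f) - ((Y†) (Y f) - f)) - ((τ : ℂ) • (Y†) z + (τ⁻¹ : ℂ) • (X†) (Y f)) := by
      have hτ' : (τ : ℂ) ≠ 0 := Complex.ofReal_ne_zero.2 hτ.ne'
      simp only [map_add, map_smulₛₗ, add_apply, smul_apply, Complex.conj_ofReal, map_inv₀,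
        RingHom.id_apply, smul_add, smul_smul, inv_mul_cancel₀ hτ', one_smul]
      abel
    calc ‖Ω - ((X + (τ : ℂ) • Y)†) (z + (τ⁻¹ : ℂ) • Y f)‖
        ≤ (‖Ω - (X†) z - f‖ + ‖(Y†) (Y f) - f‖) + (τ * ‖(Y†) z‖ + τ⁻¹ * ‖(X†) (Y f)‖) := by
          rw [herr]
          refine (norm_sub_le _ _).trans (add_le_add (norm_sub_le _ _)
            ((norm_add_le _ _).trans_eq ?_))
          rw [norm_smul, norm_smul, norm_inv, Complex.norm_of_nonneg hτ.le]
      _ ≤ (ε + ε) + (τ * ε + τ⁻¹ * ε) := by gcongr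
      _ ≤ (τ / 2) ^ 2 := by linarith

lemma exists_inner_wordOp_eq (hV : IsRowIsometry V) (hwand : ∀ x, ¬ IsWandering V x)
    (hbot : besselVectors V ≠ ⊥) [Nontrivial ι] :
    ∃ y z : H, ∀ w, ⟪wordOp V w y, z⟫ = ⟪(wordVec w : FockSpace ι), Ω⟫ := by
  obtain ⟨a, b, hab⟩ := exists_pair_ne ι
  let S : ℕ → Set (H × H) := fun n => {p | ∃ X ∈ intertwiners creation V,
    star (V b) (X Ω) = 0 ∧ X Ω = p.1 ∧ ‖Ω - (X†) p.2‖ ≤ ((1 / 2) ^ n) ^ 2}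
  have hS0 : (S 0).Nonempty := by
    refine ⟨0, 0, zero_mem _, map_zero _, rfl, ?_⟩
    simp [orthonormal_wordVec.1 []]
  have hstep : ∀ n, ∀ p ∈ S n, ∃ q ∈ S (n + 1), dist p q ≤ 2 * (1 / 2) ^ n := by
    rintro n ⟨-, z⟩ ⟨X, hX, hb, rfl, hz⟩
    obtain ⟨X', hX', z', hb', hy, hzz, herr⟩ :=
      exists_improvement hV hwand hbot hab hX hb (by positivity) hz
    refine ⟨(X' Ω, z'), ⟨X', hX', hb', rfl, ?_⟩, ?_⟩
    · rwa [show (1 / 2 : ℝ) ^ (n + 1) = (1 / 2) ^ n / 2 by ring]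
    · rw [Prod.dist_eq, dist_eq_norm, dist_eq_norm]
      exact max_le hy hzz
  obtain ⟨s, ⟨y, z⟩, hs, hlim⟩ := exists_tendsto_of_forall_exists_dist_le hS0 one_half_lt_one hstep
  choose X hX _ hXs hXz using hs
  have herr : Tendsto (fun n => (X n†) (s n).2) atTop (𝓝 Ω) := by
    refine tendsto_iff_norm_sub_tendsto_zero.2 (squeeze_zero (fun _ => norm_nonneg _)
      (fun n => norm_sub_rev Ω _ ▸ hXz n) ?_)
    simpa using (tendsto_pow_atTop_nhds_zero_of_lt_one one_half_pos.le
      (one_half_lt_one (α := ℝ))).pow 2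
  refine ⟨y, z, fun w => ?_⟩
  have hcoeff : ∀ n, ⟪wordOp V w (s n).1, (s n).2⟫ = ⟪(wordVec w : FockSpace ι), (X n†) (s n).2⟫ :=
    fun n => by
      rw [ContinuousLinearMap.adjoint_inner_right, intertwiners.map_wordVec (hX n), hXs]
  have hleft : Tendsto (fun n => ⟪wordOp V w (s n).1, (s n).2⟫) atTop (𝓝 ⟪wordOp V w y, z⟫) :=
    (((wordOp V w).continuous.tendsto _).comp hlim.fst_nhds).inner hlim.snd_nhds
  exact tendsto_nhds_unique hleft (by simpa only [hcoeff] using tendsto_const_nhds.inner herr)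

theorem exists_isWandering [Nontrivial ι] (hV : IsRowIsometry V)
    (hbot : besselVectors V ≠ ⊥) : ∃ ζ, IsWandering V ζ := by
  by_contra! hwand
  obtain ⟨y, z, hyz⟩ := exists_inner_wordOp_eq hV hwand hbot
  obtain ⟨a⟩ := Nontrivial.to_nonempty (α := ι)
  set L := invariantCore V (ℂ ∙ z)ᗮ
  have hL : V a y ∈ L := mem_invariantCore.2 fun w => by
    have hword : wordOp V w (V a y) = wordOp V (w ++ [a]) y := by
      rw [wordOp_append_apply, wordOp_cons_apply, wordOp_nil, one_apply_eq_self]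
    rw [Submodule.mem_orthogonal_singleton_iff_inner_left, hword, hyz]
    exact orthonormal_wordVec.2 (List.append_ne_nil_of_right_ne_nil w (List.cons_ne_nil a []))
  have hy : y ∈ L := hV.star_map_self a y ▸ hV.star_mem_of_forall_not_isWandering
    (isClosed_invariantCore (Submodule.isClosed_orthogonal _))
    (fun _ _ => map_mem_invariantCore _) (fun x _ => hwand x) a hL
  have hinner := Submodule.mem_orthogonal_singleton_iff_inner_left.1 (invariantCore_le hy)
  have hone : ⟪y, z⟫ = 1 :=
    (hyz []).trans (inner_self_eq_one_of_norm_eq_one (orthonormal_wordVec.1 []))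
  exact one_ne_zero (hone.symm.trans hinner)

end ExistenceOfWanderingVectors

section Ampliation

variable {κ : Type*} [Fintype κ]

variable (κ) in
/-- The diagonal representation `T ↦ T ⊕ ⋯ ⊕ T` on the direct sum of copies of `H` indexed by
`κ`; strong approximation at finitely many vectors is norm approximation at one vector there. -/
def ampliation : (H →L[ℂ] H) →ₐ[ℂ] (PiLp 2 fun _ : κ => H) →L[ℂ] PiLp 2 fun _ : κ => H :=
  AlgHom.ofLinearMap
    { toFun T := (PiLp.continuousLinearEquiv 2 ℂ fun _ : κ => H).symm.toContinuousLinearMap ∘L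
        ContinuousLinearMap.pi fun i => T ∘L PiLp.proj 2 (fun _ : κ => H) i
      map_add' _ _ := rfl
      map_smul' _ _ := rfl } rfl fun _ _ => rfl

lemma ampliation_apply (T : H →L[ℂ] H) (x : PiLp 2 fun _ : κ => H) (i : κ) :
    ampliation κ T x i = T (x i) := rfl

variable {V : ι → H →L[ℂ] H}

lemma isRowIsometry_ampliation (hV : IsRowIsometry V) :
    IsRowIsometry fun a => ampliation κ (V a) where
  inner_map_map a x y := by
    simp only [PiLp.inner_apply, ampliation_apply, hV.inner_map_map]
  inner_map_map_of_ne hab x y := by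
    simp only [PiLp.inner_apply, ampliation_apply, hV.inner_map_map_of_ne hab,
      Finset.sum_const_zero]

lemma proj_mem_intertwiners_ampliation (i : κ) :
    PiLp.proj 2 (fun _ : κ => H) i ∈ intertwiners (fun a => ampliation κ (V a)) V :=
  fun _ _ => rfl

variable [CompleteSpace H]

lemma star_ampliation (T : H →L[ℂ] H) : star (ampliation κ T) = ampliation κ (star T) := by
  rw [ContinuousLinearMap.star_eq_adjoint, eq_comm, ContinuousLinearMap.eq_adjoint_iff]
  intro x y
  simp only [PiLp.inner_apply, ampliation_apply, ContinuousLinearMap.star_eq_adjoint,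
    ContinuousLinearMap.adjoint_inner_left]

/-- The coordinates of a wandering vector for the ampliation are Bessel vectors. -/
lemma not_isWandering_ampliation [Nontrivial ι] (hV : IsRowIsometry V)
    (hwand : ∀ x, ¬ IsWandering V x) (x : PiLp 2 fun _ : κ => H) :
    ¬ IsWandering (fun a => ampliation κ (V a)) x := fun hx => by
  obtain ⟨X, hX, rfl⟩ := hx.exists_isometry_mem_intertwiners
  obtain ⟨i, hi⟩ : ∃ i, X Ω i ≠ 0 := by
    by_contra! hzero
    exact norm_ne_zero_iff.1 (hx.1.trans_ne one_ne_zero) (PiLp.ext hzero)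
  have hmem : X Ω i ∈ besselVectors V :=
    ⟨_, intertwiners.comp_mem (proj_mem_intertwiners_ampliation i) hX, rfl⟩
  obtain ⟨ζ, hζ⟩ := exists_isWandering hV fun hbot => hi ((Submodule.eq_bot_iff _).1 hbot _ hmem)
  exact hwand ζ hζ

end Ampliation

section SelfAdjoint

lemma map_mem_of_mem_adjoin {L : Submodule ℂ E} {G : Set (E →L[ℂ] E)}
    (hG : ∀ T ∈ G, ∀ x ∈ L, T x ∈ L) {T : E →L[ℂ] E} (hT : T ∈ Algebra.adjoin ℂ G) :
    ∀ x ∈ L, T x ∈ L := by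
  induction hT using Algebra.adjoin_induction with
  | mem T hT => exact hG T hT
  | algebraMap c =>
    intro x hx
    rw [Algebra.algebraMap_eq_smul_one, smul_apply, one_apply_eq_self]
    exact L.smul_mem c hx
  | add _ _ _ _ hS hT => exact fun x hx => L.add_mem (hS x hx) (hT x hx)
  | mul _ _ _ _ hS hT => exact fun x hx => hS _ (hT x hx)

/-- The closed cyclic subspace generated by `x` under an operator algebra. -/
def cyclicSubspace (𝒜 : Subalgebra ℂ (E →L[ℂ] E)) (x : E) : Submodule ℂ E :=
  (𝒜.toSubmodule.map (ContinuousLinearMap.apply ℂ E x).toLinearMap).topologicalClosure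

lemma self_mem_cyclicSubspace (𝒜 : Subalgebra ℂ (E →L[ℂ] E)) (x : E) :
    x ∈ cyclicSubspace 𝒜 x :=
  Submodule.le_topologicalClosure _ ⟨1, one_mem 𝒜, rfl⟩

lemma map_mem_cyclicSubspace {𝒜 : Subalgebra ℂ (E →L[ℂ] E)} {T : E →L[ℂ] E} (hT : T ∈ 𝒜)
    {x y : E} (hy : y ∈ cyclicSubspace 𝒜 x) : T y ∈ cyclicSubspace 𝒜 x :=
  map_mem_closure T.continuous hy fun _ ⟨S, hS, hSx⟩ => ⟨T * S, 𝒜.mul_mem hT hS, congrArg T hSx⟩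

lemma exists_dist_lt_of_mem_cyclicSubspace {𝒜 : Subalgebra ℂ (E →L[ℂ] E)} {x y : E}
    (hy : y ∈ cyclicSubspace 𝒜 x) {ε : ℝ} (hε : 0 < ε) : ∃ T ∈ 𝒜, dist y (T x) < ε := by
  obtain ⟨_, ⟨T, hT, rfl⟩, hdist⟩ := Metric.mem_closure_iff.1 hy ε hε
  exact ⟨T, hT, hdist⟩

lemma mem_wotClosure_of_forall_finset {A : E →L[ℂ] E} {S : Set (E →L[ℂ] E)}
    (h : ∀ (F : Finset E) (ε : ℝ), 0 < ε → ∃ B ∈ S, ∀ x ∈ F, ‖(A - B) x‖ < ε) :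
    A ∈ wotClosure S := by
  intro ε hε F
  obtain ⟨C, hC0, hC⟩ : ∃ C > 0, ∀ p ∈ F, ‖p.1‖ ≤ C :=
    ⟨∑ p ∈ F, ‖p.1‖ + 1, by positivity, fun p hp =>
      (Finset.single_le_sum (f := fun p : E × E => ‖p.1‖) (fun _ _ => norm_nonneg _) hp).trans
        (le_add_of_nonneg_right zero_le_one)⟩
  obtain ⟨B, hB, hAB⟩ := h (F.image Prod.snd) (ε / C) (by positivity)
  refine ⟨B, hB, fun p hp => ?_⟩
  calc ‖⟪p.1, (A - B) p.2⟫‖ ≤ ‖p.1‖ * ‖(A - B) p.2‖ := norm_inner_le_norm _ _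
    _ ≤ C * ‖(A - B) p.2‖ := by gcongr; exact hC p hp
    _ < C * (ε / C) := by gcongr; exact hAB p.2 (Finset.mem_image_of_mem _ hp)
    _ = ε := mul_div_cancel₀ ε hC0.ne'

variable [CompleteSpace H]

lemma star_mem_wotClosure {S T : Set (H →L[ℂ] H)} (hST : ∀ B ∈ S, star B ∈ wotClosure T)
    {A : H →L[ℂ] H} (hA : A ∈ wotClosure S) : star A ∈ wotClosure T := by
  intro ε hε F
  obtain ⟨B, hB, hAB⟩ := hA (ε / 2) (half_pos hε) (F.image Prod.swap)
  obtain ⟨C, hC, hBC⟩ := hST B hB (ε / 2) (half_pos hε) F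
  refine ⟨C, hC, fun p hp => ?_⟩
  have hstar : ‖⟪p.1, (star A - star B) p.2⟫‖ < ε / 2 := by
    rw [← star_sub, ContinuousLinearMap.star_eq_adjoint,
      ContinuousLinearMap.adjoint_inner_right, norm_inner_symm]
    exact hAB p.swap (Finset.mem_image_of_mem _ hp)
  calc ‖⟪p.1, (star A - C) p.2⟫‖
      = ‖⟪p.1, (star A - star B) p.2⟫ + ⟪p.1, (star B - C) p.2⟫‖ := by
        rw [← inner_add_right, ← add_apply, sub_add_sub_cancel]
    _ ≤ ‖⟪p.1, (star A - star B) p.2⟫‖ + ‖⟪p.1, (star B - C) p.2⟫‖ := norm_add_le _ _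
    _ < ε := (add_lt_add hstar (hBC p hp)).trans_eq (add_halves ε)

variable {V : ι → H →L[ℂ] H}

lemma IsRowIsometry.star_mem_of_mem_adjoin (hV : IsRowIsometry V)
    (hwand : ∀ x, ¬ IsWandering V x) {L : Submodule ℂ H} (hcl : IsClosed (L : Set H))
    (hL : ∀ a, ∀ x ∈ L, V a x ∈ L) {B : H →L[ℂ] H} (hB : B ∈ Algebra.adjoin ℂ (Set.range V)) :
    ∀ x ∈ L, star B x ∈ L := by
  have hstar : star B ∈ Algebra.adjoin ℂ (star (Set.range V)) := by
    rwa [← Subalgebra.star_adjoin_comm, Subalgebra.star_mem_star_iff]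
  refine map_mem_of_mem_adjoin (fun T hT x hx => ?_) hstar
  obtain ⟨a, ha⟩ := Set.mem_star.1 hT
  rw [← star_star T, ← ha]
  exact hV.star_mem_of_forall_not_isWandering hcl hL (fun x _ => hwand x) a hx

lemma IsRowIsometry.exists_norm_star_sub_lt [Nontrivial ι] (hV : IsRowIsometry V)
    (hwand : ∀ x, ¬ IsWandering V x) {B : H →L[ℂ] H} (hB : B ∈ Algebra.adjoin ℂ (Set.range V))
    (F : Finset H) {ε : ℝ} (hε : 0 < ε) :
    ∃ P ∈ Algebra.adjoin ℂ (Set.range V), ∀ x ∈ F, ‖(star B - P) x‖ < ε := by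
  set 𝒜 := (Algebra.adjoin ℂ (Set.range V)).map (ampliation F)
  set x₀ : PiLp 2 fun _ : F => H := WithLp.toLp 2 Subtype.val
  have hgen : ∀ a, ampliation F (V a) ∈ 𝒜 := fun a =>
    ⟨V a, Algebra.subset_adjoin (Set.mem_range_self a), rfl⟩
  have hB' : ampliation F B ∈ Algebra.adjoin ℂ (Set.range fun a => ampliation F (V a)) := by
    rw [Set.range_comp' (ampliation F) V, ← AlgHom.map_adjoin]
    exact ⟨B, hB, rfl⟩
  have hmem : star (ampliation F B) x₀ ∈ cyclicSubspace 𝒜 x₀ :=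
    (isRowIsometry_ampliation hV).star_mem_of_mem_adjoin (not_isWandering_ampliation hV hwand)
      (Submodule.isClosed_topologicalClosure _) (fun a _ => map_mem_cyclicSubspace (hgen a)) hB' _
      (self_mem_cyclicSubspace 𝒜 x₀)
  obtain ⟨_, ⟨P, hP, rfl⟩, hdist⟩ := exists_dist_lt_of_mem_cyclicSubspace hmem hε
  rw [star_ampliation, dist_eq_norm] at hdist
  exact ⟨P, hP, fun x hx => (PiLp.norm_apply_le _ (⟨x, hx⟩ : F)).trans_lt hdist⟩

theorem IsRowIsometry.star_mem_genWotAlg [Nontrivial ι] (hV : IsRowIsometry V)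
    (hwand : ∀ x, ¬ IsWandering V x) {A : H →L[ℂ] H} (hA : A ∈ genWotAlg (Set.range V)) :
    star A ∈ genWotAlg (Set.range V) :=
  star_mem_wotClosure (fun _ hB => mem_wotClosure_of_forall_finset fun F _ hε =>
    hV.exists_norm_star_sub_lt hwand hB F hε) hA

end SelfAdjoint

section Restriction

variable {V : ι → E →L[ℂ] E} {M : Submodule ℂ E}

lemma coe_restrictCLM {A : E →L[ℂ] E} (hA : ∀ x ∈ M, A x ∈ M) (x : M) :
    (restrictCLM A M x : E) = A x := by
  rw [restrictCLM, dif_pos hA]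
  rfl

lemma coe_wordOp_restrictCLM (hM : ∀ a, ∀ x ∈ M, V a x ∈ M) (w : List ι) (x : M) :
    (wordOp (fun a => restrictCLM (V a) M) w x : E) = wordOp V w x :=
  intertwiners.map_wordOp (X := M.subtypeL) (fun a x => coe_restrictCLM (hM a) x) w x

lemma isRowIsometry_restrictCLM (hV : IsRowIsometry V) (hM : ∀ a, ∀ x ∈ M, V a x ∈ M) :
    IsRowIsometry fun a => restrictCLM (V a) M where
  inner_map_map a x y := by
    rw [Submodule.coe_inner, coe_restrictCLM (hM a), coe_restrictCLM (hM a), hV.inner_map_map,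
      Submodule.coe_inner]
  inner_map_map_of_ne {a b} hab x y := by
    rw [Submodule.coe_inner, coe_restrictCLM (hM a), coe_restrictCLM (hM b),
      hV.inner_map_map_of_ne hab]

lemma isWandering_coe (hM : ∀ a, ∀ x ∈ M, V a x ∈ M) {x : M}
    (hx : IsWandering (fun a => restrictCLM (V a) M) x) : IsWandering V (x : E) :=
  ⟨hx.1, fun w w' => by
    simpa only [Submodule.coe_inner, coe_wordOp_restrictCLM hM] using hx.2 w w'⟩

lemma restrictedAlgSelfAdjoint_of_forall_not_isWandering [CompleteSpace H] [Nontrivial ι]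
    {V : ι → H →L[ℂ] H} (hV : IsRowIsometry V) {M : Submodule ℂ H} (hcl : IsClosed (M : Set H))
    (hM : ∀ a, ∀ x ∈ M, V a x ∈ M) (hwand : ∀ x ∈ M, ¬ IsWandering V x) :
    restrictedAlgSelfAdjoint V M := fun A hA => by
  have : CompleteSpace M := hcl.completeSpace_coe
  refine ⟨star A, (isRowIsometry_restrictCLM hV hM).star_mem_genWotAlg
    (fun x hx => hwand x x.2 (isWandering_coe hM hx)) hA, fun x y => ?_⟩
  rw [← Submodule.coe_inner, ← Submodule.coe_inner, ContinuousLinearMap.star_eq_adjoint,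
    ContinuousLinearMap.adjoint_inner_right]

end Restriction

lemma not_isWandering_of_mem_orthogonal {V : ι → E →L[ℂ] E} {x : E}
    (hx : x ∈ ((Submodule.span ℂ {ζ : E | IsWandering V ζ}).topologicalClosure)ᗮ) :
    ¬ IsWandering V x := fun hwand => by
  have hself : ⟪x, x⟫ = 0 :=
    hx x (Submodule.le_topologicalClosure _ (Submodule.subset_span hwand))
  exact one_ne_zero (hwand.1.symm.trans (norm_eq_zero.2 (inner_self_eq_zero.1 hself)))

theorem statement9_general [CompleteSpace H] [Nontrivial ι] {V : ι → H →L[ℂ] H}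
    (hV : IsRowIsometry V)
    (hsing : ∀ M : Submodule ℂ H, IsClosed (M : Set H) → (∀ a, ∀ x ∈ M, V a x ∈ M) →
      (∀ a, ∀ x ∈ M, star (V a) x ∈ M) → restrictedAlgSelfAdjoint V M → M = ⊥)
    {v : H} (hv : v ≠ 0) :
    ∃ w, wordOp V w v ∉ ((Submodule.span ℂ {ζ : H | IsWandering V ζ}).topologicalClosure)ᗮ := by
  by_contra! horbit
  set M := invariantCore V ((Submodule.span ℂ {ζ : H | IsWandering V ζ}).topologicalClosure)ᗮ
  have hcl : IsClosed (M : Set H) := isClosed_invariantCore (Submodule.isClosed_orthogonal _)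
  have hM : ∀ a, ∀ x ∈ M, V a x ∈ M := fun a _ => map_mem_invariantCore a
  have hwand : ∀ x ∈ M, ¬ IsWandering V x := fun _ hx =>
    not_isWandering_of_mem_orthogonal (invariantCore_le hx)
  have hbot : M = ⊥ := hsing M hcl hM
    (fun a _ => hV.star_mem_of_forall_not_isWandering hcl hM hwand a)
    (restrictedAlgSelfAdjoint_of_forall_not_isWandering hV hcl hM hwand)
  exact hv ((Submodule.eq_bot_iff M).1 hbot v (mem_invariantCore.2 horbit))

end WanderingVectors

/-- For a row-isometry of dilation type, no nonzero vector in the range of the structure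
projection has its entire forward orbit in that range. -/
theorem statement9 {K : Type*} [NormedAddCommGroup K] [InnerProductSpace ℂ K]
    [CompleteSpace K] {N : ℕ} (hN : 2 ≤ N) (V : Fin N → K →L[ℂ] K)
    (hiso : ∀ a b, star (V a) * V b = if a = b then 1 else 0)
    (hdil : IsDilationType V) :
    ∀ v : K, v ∈ ((Submodule.span ℂ {ζ : K | IsWandering V ζ}).topologicalClosure)ᗮ →
      v ≠ 0 → ∃ w : List (Fin N),
        wordOp V w v ∉ ((Submodule.span ℂ {ζ : K | IsWandering V ζ}).topologicalClosure)ᗮ :=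
  have := Fin.nontrivial_iff_two_le.2 hN
  fun _ _ => statement9_general (.of_star_mul_eq_ite hiso) fun M hcl hM hM' hsing =>
    of_not_not fun hbot => hdil.2 ⟨M, hbot, hcl, hM, hM', .inr hsing⟩
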